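/- Let g be a complex semisimple Lie algebra with an sl2-triple (e,h,f), and let g = ⊕_{i∈ℤ} g(i) be the ad h weight decomposition. Then the bilinear form on g(-1) given by (x,y) ↦ κ(e,[x,y]), where κ is the Killing form, is skew-symmetric and nondegenerate. -/

import Mathlib

/-!
Let `E, F, H` be the operators by which `(e, f, h)` acts on a finite-dimensional module. On `ker E`
one has `Eᵏ Fᵏ = k! H (H - 1) ⋯ (H - k + 1)`. As `F` is nilpotent, `H` is annihilated on `ker E` by
a polynomial with simple roots, so it has no Jordan blocks there. If `v` has generalized weight `μ`
and `Eᵏ⁺¹ v = 0`, the same identity provides, unless `μ` is a negative integer, a multiple of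
`Fᵏ Eᵏ v` whose difference with `v` is killed by `Eᵏ`; by induction on `k`, `v` is a genuine weight
vector.

Now let `x ∈ g(-1)` be in the radical of the form. By invariance `⁅e, x⁆ ∈ g(1)` is orthogonal to
`g(-1) = ker (ad h + 1)`, hence lies in the range of `ad h - 1`, because `ad h` is skew-adjoint.
Since `ad h` has no Jordan block of weight `1`, `⁅e, x⁆ = 0`, and a highest weight cannot be `-1`.
-/

open LieModule Module Polynomial
open scoped Nat

section LinearAlgebra

variable {K V : Type*} [Field K] [AddCommGroup V] [Module K V]

theorem disjoint_eigenspace_range_of_maxGenEigenspace_eq {R M : Type*} [CommRing R]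
    [AddCommGroup M] [Module R M] {T : End R M} {μ : R}
    (hT : T.maxGenEigenspace μ = T.eigenspace μ) :
    Disjoint (T.eigenspace μ) (LinearMap.range (T - μ • 1)) := by
  rw [Submodule.disjoint_def]
  rintro _ hv ⟨v, rfl⟩
  rw [End.eigenspace_def, LinearMap.mem_ker] at hv
  have hv_eigen : v ∈ T.eigenspace μ := hT ▸ (T.mem_maxGenEigenspace μ v).mpr ⟨2, hv⟩
  rwa [End.eigenspace_def, LinearMap.mem_ker] at hv_eigen

theorem squarefree_descPochhammer [CharZero K] (n : ℕ) : Squarefree (descPochhammer K n) := by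
  have prod_eq : descPochhammer K n = ∏ i ∈ Finset.range n, (X - C (i : K)) := by
    induction n with
    | zero => simp
    | succ n ih => rw [descPochhammer_succ_right, Finset.prod_range_succ, ih, map_natCast]
  rw [prod_eq]
  exact (separable_prod_X_sub_C_iff'.mpr fun _ _ _ _ h ↦ Nat.cast_injective h).squarefree

theorem mem_eigenspace_of_aeval_eq_zero_of_squarefree {T : End K V} {p : K[X]} (hp : Squarefree p)
    {v : V} (hpv : aeval T p v = 0) {μ : K} (hv : v ∈ T.maxGenEigenspace μ) :
    v ∈ T.eigenspace μ := by
  classical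
  obtain ⟨n, hn⟩ := (T.mem_maxGenEigenspace μ v).mp hv
  have aeval_X_sub_C : aeval T (X - C μ) = T - μ • (1 : End K V) := by
    rw [map_sub, aeval_X, aeval_C, Algebra.algebraMap_eq_smul_one]
  have gcd_dvd : EuclideanDomain.gcd p ((X - C μ) ^ n) ∣ X - C μ :=
    (hp.squarefree_of_dvd (EuclideanDomain.gcd_dvd_left _ _)).isRadical n _
      (EuclideanDomain.gcd_dvd_right _ _)
  have aeval_gcd : aeval T (EuclideanDomain.gcd p ((X - C μ) ^ n)) v = 0 := by
    rw [EuclideanDomain.gcd_eq_gcd_ab, mul_comm p, mul_comm (_ ^ n)]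
    simp only [map_add, map_mul, map_pow, aeval_X_sub_C, LinearMap.add_apply, End.mul_apply, hpv,
      hn, map_zero, add_zero]
  obtain ⟨q, hq⟩ := gcd_dvd
  have h_apply : (T - μ • (1 : End K V)) v = 0 := by
    rw [← aeval_X_sub_C, hq, mul_comm, map_mul, End.mul_apply, aeval_gcd, map_zero]
  rw [End.mem_eigenspace_iff]
  simpa [sub_eq_zero] using h_apply

theorem orthogonal_ker_eq_range_of_isAdjointPair [FiniteDimensional K V]
    {B : LinearMap.BilinForm K V} (hB : B.Nondegenerate) (hB_refl : B.IsRefl) {S T : End K V}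
    (hST : LinearMap.IsAdjointPair B B S T) :
    B.orthogonal (LinearMap.ker T) = LinearMap.range S := by
  have orthogonal_range : B.orthogonal (LinearMap.range S) = LinearMap.ker T := by
    ext v
    simp only [LinearMap.BilinForm.mem_orthogonal_iff, LinearMap.mem_range, forall_exists_index,
      forall_apply_eq_imp_iff, LinearMap.mem_ker]
    refine ⟨fun h ↦ hB.2 _ fun u ↦ ?_, fun h u ↦ ?_⟩
    · rw [← hST u v, h]
    · rw [hST u v, h, map_zero]
  rw [← orthogonal_range, LinearMap.BilinForm.orthogonal_orthogonal hB hB_refl]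

theorem isNilpotent_of_mul_sub_mul_eq_smul [CharZero K] {A : Type*} [Ring A] [Algebra K A]
    [FiniteDimensional K A] {a x : A} {c : K} (hc : c ≠ 0) (hx : a * x - x * a = c • x) :
    IsNilpotent x := by
  let D : End K A := LinearMap.mulLeft K a - LinearMap.mulRight K a
  have D_mul (y z : A) : D (y * z) = D y * z + y * D z := by
    simp only [D, LinearMap.sub_apply, LinearMap.mulLeft_apply, LinearMap.mulRight_apply]
    noncomm_ring
  have D_pow (n : ℕ) : D (x ^ n) = (n * c) • x ^ n := by
    induction n with
    | zero => simp [D]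
    | succ n ih =>
      rw [pow_succ, D_mul, ih, show D x = c • x from hx, smul_mul_assoc, mul_smul_comm, ← add_smul]
      push_cast
      ring_nf
  by_contra hx_nilp
  have hasEigenvalue (n : ℕ) : D.HasEigenvalue (n * c) :=
    End.hasEigenvalue_of_hasEigenvector
      ⟨End.mem_eigenspace_iff.mpr (D_pow n), fun h ↦ hx_nilp ⟨n, h⟩⟩
  have weights_injective : Function.Injective fun n : ℕ ↦ (n * c : K) := fun m n hmn ↦
    Nat.cast_injective (mul_right_cancel₀ hc hmn)
  exact Set.infinite_of_injective_forall_mem weights_injective hasEigenvalue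
    D.finite_hasEigenvalue

end LinearAlgebra

section Sl2Modules

variable {R L M : Type*} [CommRing R] [LieRing L] [LieAlgebra R L]
  [AddCommGroup M] [Module R M] [LieRingModule L M] [LieModule R L M] {h e f : L}

theorem lie_e_toEnd_f_pow_succ_of_lie_e_eq_zero (t : IsSl2Triple h e f) {v : M} (hv : ⁅e, v⁆ = 0)
    (k : ℕ) :
    ⁅e, (toEnd R L M f ^ (k + 1)) v⁆ =
      ((k : R) + 1) • (toEnd R L M f ^ k) (⁅h, v⁆ - (k : R) • v) := by
  have lie_h_pow (k : ℕ) : ⁅h, (toEnd R L M f ^ k) v⁆ =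
      (toEnd R L M f ^ k) ⁅h, v⁆ - (2 * k : R) • (toEnd R L M f ^ k) v := by
    induction k with
    | zero => simp
    | succ k ih =>
      simp only [pow_succ', End.mul_apply, toEnd_apply_apply]
      rw [leibniz_lie h, t.lie_lie_smul_f R, ih, neg_lie, smul_lie, lie_sub, lie_smul]
      push_cast
      module
  induction k with
  | zero => simp [leibniz_lie e, t.lie_e_f, hv]
  | succ k ih =>
    rw [pow_succ', End.mul_apply, toEnd_apply_apply, leibniz_lie e, t.lie_e_f, ih, lie_h_pow,
      lie_smul, ← toEnd_apply_apply R L M f, ← End.mul_apply, ← pow_succ']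
    simp only [map_sub, map_smul]
    push_cast
    module

theorem toEnd_e_pow_toEnd_f_pow_of_lie_e_eq_zero (t : IsSl2Triple h e f) (k : ℕ) {v : M}
    (hv : ⁅e, v⁆ = 0) :
    (toEnd R L M e ^ k) ((toEnd R L M f ^ k) v) =
      (k ! : R) • aeval (toEnd R L M h) (descPochhammer R k) v := by
  induction k generalizing v with
  | zero => simp
  | succ k ih =>
    have lie_e_sub : ⁅e, ⁅h, v⁆ - (k : R) • v⁆ = 0 := by
      rw [lie_sub, lie_smul, hv, leibniz_lie e, hv, ← lie_skew, t.lie_h_e_smul R, neg_lie,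
        smul_lie, hv]
      simp
    calc (toEnd R L M e ^ (k + 1)) ((toEnd R L M f ^ (k + 1)) v)
      _ = (toEnd R L M e ^ k) ⁅e, (toEnd R L M f ^ (k + 1)) v⁆ := by
        rw [pow_succ, End.mul_apply, toEnd_apply_apply]
      _ = ((k : R) + 1) • (k ! : R) •
          aeval (toEnd R L M h) (descPochhammer R k) (⁅h, v⁆ - (k : R) • v) := by
        rw [lie_e_toEnd_f_pow_succ_of_lie_e_eq_zero t hv, map_smul, ih lie_e_sub]
      _ = ((k + 1) ! : R) • aeval (toEnd R L M h) (descPochhammer R (k + 1)) v := by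
        rw [smul_smul, descPochhammer_succ_right, map_mul, End.mul_apply, Nat.factorial_succ]
        simp [← Nat.cast_smul_eq_nsmul R]

theorem toEnd_e_pow_mem_maxGenEigenspace (t : IsSl2Triple h e f) {μ : R} {v : M}
    (hv : v ∈ (toEnd R L M h).maxGenEigenspace μ) (k : ℕ) :
    (toEnd R L M e ^ k) v ∈ (toEnd R L M h).maxGenEigenspace (μ + 2 * k) := by
  have he : e ∈ (toEnd R L L h).maxGenEigenspace 2 :=
    End.mem_maxGenEigenspace _ _ _ |>.mpr ⟨1, by simp [t.lie_h_e_smul R]⟩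
  induction k with
  | zero => simpa using hv
  | succ k ih =>
    rw [pow_succ', End.mul_apply, toEnd_apply_apply]
    convert lie_mem_maxGenEigenspace_toEnd he ih using 2
    push_cast
    ring

end Sl2Modules

section Field

variable {K L M : Type*} [Field K] [CharZero K] [LieRing L] [LieAlgebra K L]
  [AddCommGroup M] [Module K M] [LieRingModule L M] [LieModule K L M] {h e f : L}

theorem exists_toEnd_e_pow_toEnd_f_pow_smul_eq (t : IsSl2Triple h e f) {μ : K}
    (hμ : ∀ n : ℕ, μ ≠ -(n + 1)) (k : ℕ) {w : M} (hew : ⁅e, w⁆ = 0)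
    (hw : ⁅h, w⁆ = (μ + 2 * k) • w) :
    ∃ c : K, (toEnd K L M e ^ k) ((toEnd K L M f ^ k) (c • w)) = w := by
  have eval_ne_zero : (descPochhammer K k).eval (μ + 2 * k) ≠ 0 := by
    rw [descPochhammer_eval_eq_prod_range, Finset.prod_ne_zero_iff]
    intro j hj h0
    obtain ⟨d, rfl⟩ := Nat.exists_eq_add_of_lt (Finset.mem_range.mp hj)
    refine hμ (j + 2 * d + 1) ?_
    push_cast at h0 ⊢
    linear_combination h0
  refine ⟨((k ! : K) * (descPochhammer K k).eval (μ + 2 * k))⁻¹, ?_⟩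
  rw [map_smul, map_smul, toEnd_e_pow_toEnd_f_pow_of_lie_e_eq_zero t k hew,
    End.aeval_apply_of_mem_apply_eq_smul hw, smul_smul (k ! : K),
    inv_smul_smul₀ (mul_ne_zero (mod_cast k.factorial_ne_zero) eval_ne_zero)]

variable [FiniteDimensional K M]

theorem isNilpotent_toEnd_e (t : IsSl2Triple h e f) : IsNilpotent (toEnd K L M e) :=
  isNilpotent_of_mul_sub_mul_eq_smul (a := toEnd K L M h) (two_ne_zero (α := K)) <| by
    ext v
    simp [leibniz_lie h, t.lie_h_e_smul K]

theorem mem_eigenspace_of_mem_maxGenEigenspace_of_lie_e_eq_zero (t : IsSl2Triple h e f) {v : M}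
    (hev : ⁅e, v⁆ = 0) {μ : K} (hv : v ∈ (toEnd K L M h).maxGenEigenspace μ) :
    v ∈ (toEnd K L M h).eigenspace μ := by
  obtain ⟨n, hn⟩ : IsNilpotent (toEnd K L M f) := isNilpotent_toEnd_e t.symm
  refine mem_eigenspace_of_aeval_eq_zero_of_squarefree (squarefree_descPochhammer n) ?_ hv
  have smul_aeval_eq_zero := toEnd_e_pow_toEnd_f_pow_of_lie_e_eq_zero (R := K) t n hev
  rw [hn, LinearMap.zero_apply, map_zero] at smul_aeval_eq_zero
  exact (smul_eq_zero.mp smul_aeval_eq_zero.symm).resolve_left (mod_cast n.factorial_ne_zero)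

theorem maxGenEigenspace_toEnd_h_eq_eigenspace (t : IsSl2Triple h e f) {μ : K}
    (hμ : ∀ n : ℕ, μ ≠ -(n + 1)) :
    (toEnd K L M h).maxGenEigenspace μ = (toEnd K L M h).eigenspace μ := by
  refine le_antisymm (fun v hv ↦ ?_) End.eigenspace_le_maxGenEigenspace
  obtain ⟨k, hk⟩ := isNilpotent_toEnd_e (K := K) (M := M) t
  replace hk : (toEnd K L M e ^ k) v = 0 := by rw [hk, LinearMap.zero_apply]
  induction k generalizing v with
  | zero => exact (show v = 0 from hk) ▸ Submodule.zero_mem _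
  | succ k ih =>
    set w := (toEnd K L M e ^ k) v
    have hew : ⁅e, w⁆ = 0 := by rwa [pow_succ', End.mul_apply] at hk
    have hw : ⁅h, w⁆ = (μ + 2 * k) • w := End.mem_eigenspace_iff.mp <|
      mem_eigenspace_of_mem_maxGenEigenspace_of_lie_e_eq_zero t hew
        (toEnd_e_pow_mem_maxGenEigenspace t hv k)
    obtain ⟨c, hc⟩ := exists_toEnd_e_pow_toEnd_f_pow_smul_eq t hμ k hew hw
    set u := (toEnd K L M f ^ k) (c • w)
    have hu : u ∈ (toEnd K L M h).eigenspace μ := by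
      have h_lie : ⁅-h, c • w⁆ = (-(μ + 2 * k)) • c • w := by
        rw [neg_lie, lie_smul, hw, neg_smul, smul_comm]
      have lie_neg_h_u := t.symm.lie_h_pow_toEnd_e h_lie k
      rw [neg_lie, neg_eq_iff_eq_neg, ← neg_smul] at lie_neg_h_u
      rw [End.mem_eigenspace_iff, toEnd_apply_apply, lie_neg_h_u]
      congr 1
      ring
    have hvu : v - u ∈ (toEnd K L M h).eigenspace μ :=
      ih (v - u) (sub_mem hv (End.eigenspace_le_maxGenEigenspace hu))
        (by rw [map_sub, hc, sub_self])
    simpa using add_mem hvu hu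

end Field

theorem mem_range_ad_sub_of_forall_mem_eigenspace_neg {K L : Type*} [Field K] [LieRing L]
    [LieAlgebra K L] [FiniteDimensional K L] {B : LinearMap.BilinForm K L} (hB : B.Nondegenerate)
    (hB_refl : B.IsRefl) (hB_inv : B.lieInvariant L) (h : L) {μ : K} {z : L}
    (hz : ∀ y ∈ (LieAlgebra.ad K L h).eigenspace (-μ), B z y = 0) :
    z ∈ LinearMap.range (LieAlgebra.ad K L h - μ • 1) := by
  let S : End K L := LieAlgebra.ad K L h - μ • 1
  let T : End K L := LieAlgebra.ad K L h - (-μ) • 1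
  have isAdjointPair : LinearMap.IsAdjointPair B B S ⇑(-T) := fun x y ↦ by
    have h_lie : B ⁅h, x⁆ y = -B x ⁅h, y⁆ := hB_inv h x y
    simp only [S, T, LinearMap.sub_apply, LinearMap.neg_apply, LinearMap.smul_apply,
      End.one_apply, LieAlgebra.ad_apply, map_sub, map_neg, map_smul, h_lie, smul_eq_mul]
    ring
  rw [← orthogonal_ker_eq_range_of_isAdjointPair hB hB_refl isAdjointPair]
  refine fun y hy ↦ hB_refl _ _ (hz y ?_)
  rw [LinearMap.mem_ker, LinearMap.neg_apply, neg_eq_zero] at hy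
  rwa [End.eigenspace_def, LinearMap.mem_ker]

theorem stmt0_general {K L : Type*} [Field K] [CharZero K] [LieRing L] [LieAlgebra K L]
    [FiniteDimensional K L] {B : LinearMap.BilinForm K L} (hB : B.Nondegenerate)
    (hB_refl : B.IsRefl) (hB_inv : B.lieInvariant L) {h e f : L} (ht : IsSl2Triple h e f) :
    (∀ x ∈ (LieAlgebra.ad K L h).eigenspace (-1), ∀ y ∈ (LieAlgebra.ad K L h).eigenspace (-1),
      B e ⁅x, y⁆ = -B e ⁅y, x⁆) ∧
    (∀ x ∈ (LieAlgebra.ad K L h).eigenspace (-1),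
      (∀ y ∈ (LieAlgebra.ad K L h).eigenspace (-1), B e ⁅x, y⁆ = 0) → x = 0) := by
  refine ⟨fun x _ y _ ↦ by rw [← lie_skew x y, map_neg], fun x hx hxy ↦ ?_⟩
  have hhx : ⁅h, x⁆ = (-1 : K) • x := End.mem_eigenspace_iff.mp hx
  have hex_mem : ⁅e, x⁆ ∈ (LieAlgebra.ad K L h).eigenspace 1 := by
    rw [End.mem_eigenspace_iff, LieAlgebra.ad_apply, leibniz_lie h, ht.lie_h_e_smul K, hhx,
      smul_lie, lie_smul]
    module
  have hex_orthogonal : ∀ y ∈ (LieAlgebra.ad K L h).eigenspace (-1), B ⁅e, x⁆ y = 0 :=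
    fun y hy ↦ by rw [← lie_skew, map_neg, LinearMap.neg_apply, hB_inv, neg_neg, hxy y hy]
  have hex_range : ⁅e, x⁆ ∈ LinearMap.range (LieAlgebra.ad K L h - (1 : K) • 1) :=
    mem_range_ad_sub_of_forall_mem_eigenspace_neg hB hB_refl hB_inv h hex_orthogonal
  have h_one : (LieAlgebra.ad K L h).maxGenEigenspace 1 = (LieAlgebra.ad K L h).eigenspace 1 :=
    maxGenEigenspace_toEnd_h_eq_eigenspace ht fun n hn ↦
      Nat.cast_add_one_ne_zero (R := K) (n + 1) (by push_cast; linear_combination hn)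
  have hex : ⁅e, x⁆ = 0 := Submodule.disjoint_def.mp
    (disjoint_eigenspace_range_of_maxGenEigenspace_eq h_one) _ hex_mem hex_range
  by_contra hx0
  obtain ⟨n, hn⟩ := (IsSl2Triple.HasPrimitiveVectorWith.mk (t := ht) hx0 hhx hex).exists_nat
  exact Nat.cast_add_one_ne_zero n (by rw [← hn, neg_add_cancel])

/-- Let `g` be a complex semisimple Lie algebra with an `sl₂`-triple
`(e, h, f)` and let `g(i)` denote the `ad h` weight space of weight `i`.  Then the bilinear
form on `g(-1)` given by `(x, y) ↦ κ(e, ⁅x, y⁆)`, where `κ` is the Killing form, is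
skew-symmetric and nondegenerate. -/
theorem stmt0 (L : Type*) [LieRing L] [LieAlgebra ℂ L] [Module.Finite ℂ L]
    [LieAlgebra.IsSemisimple ℂ L] (h e f : L) (ht : IsSl2Triple h e f) :
    (∀ x ∈ Module.End.eigenspace (LieAlgebra.ad ℂ L h) (-1 : ℂ),
      ∀ y ∈ Module.End.eigenspace (LieAlgebra.ad ℂ L h) (-1 : ℂ),
        killingForm ℂ L e ⁅x, y⁆ = - killingForm ℂ L e ⁅y, x⁆) ∧
    (∀ x ∈ Module.End.eigenspace (LieAlgebra.ad ℂ L h) (-1 : ℂ),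
      (∀ y ∈ Module.End.eigenspace (LieAlgebra.ad ℂ L h) (-1 : ℂ),
        killingForm ℂ L e ⁅x, y⁆ = 0) → x = 0) := by
  exact stmt0_general (LieAlgebra.IsKilling.killingForm_nondegenerate ℂ L)
    (traceForm_isSymm ℂ L L).isRefl (traceForm_lieInvariant ℂ L L) ht
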